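/- Let p, q ≥ 2 be integers such that p^r = q^s for some positive integers r and s. Then a real number x ∈ [0,1) is normal to base p if and only if it is normal to base q (Schmidt, part 1). -/

import Mathlib

open Filter MeasureTheory Topology
open scoped Classical

/-- The `(n+1)`-st digit (i.e. `ε_{n+1}`, `0`-indexed by `n`) of the base-`q` expansion of `x`,
chosen as the greedy expansion (never eventually equal to `q - 1`). -/
noncomputable def qdigit (q : ℕ) (x : ℝ) (n : ℕ) : ℕ :=
  (⌊x * (q : ℝ) ^ (n + 1)⌋).toNat % q

/-- `x` is normal to base `q`: every word `d` of length `m ≥ 1` over `{0, …, q-1}` occurs in the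
base-`q` digit sequence of `x` with frequency `q^{-m}`. -/
def IsNormal (q : ℕ) (x : ℝ) : Prop :=
  ∀ m : ℕ, 0 < m → ∀ d : Fin m → ℕ, (∀ i, d i < q) →
    Tendsto
      (fun N : ℕ =>
        (((Finset.range N).filter fun n =>
          ∀ i : Fin m, qdigit q x (n + (i : ℕ)) = d i).card : ℝ) / N)
      atTop (𝓝 (((q : ℝ) ^ m)⁻¹))

/-! Normality of `x ≥ 0` to base `q` means that `x mod 1` is generic for Haar measure under
`y ↦ q • y` on the circle: the frequencies of words are the empirical measures of cylinders, and
cylinders are continuity sets forming a countable π-system that contains arbitrarily small sets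
around every point, so they test weak convergence.

For an invariant measure `μ`, genericity under `T` and under `T^r` are equivalent as soon as `T^r`
is ergodic. Averaging an observable over `r` steps passes from `T^r` to `T`. Conversely, by
compactness it suffices to identify any limit point `ν` of the empirical measures of `T^r`; it is
`T^r`-invariant and satisfies `(1 / r) ∑_{j < r} (T^j)_* ν = μ`, so `ν ≪ μ`, and ergodicity of
`T^r` gives `ν = μ`. Since `p ^ r = q ^ s`, the maps `y ↦ p • y` and `y ↦ q • y` have a common
iterate, which compares the two bases. -/

section WeakConvergence

open scoped ENNReal

variable {X : Type*} [MeasurableSpace X]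

lemma exists_finset_lt_measure_biUnion {ν : Measure X} {C : Set (Set X)} (hC : C.Countable)
    {c : ℝ≥0∞} (hc : c < ν (⋃₀ C)) : ∃ t : Finset (Set X), ↑t ⊆ C ∧ c < ν (⋃ s ∈ t, s) := by
  obtain rfl | hne := C.eq_empty_or_nonempty
  · simp at hc
  obtain ⟨f, rfl⟩ := hC.exists_eq_range hne
  rw [Set.sUnion_range, measure_iUnion_eq_iSup_accumulate, lt_iSup_iff] at hc
  obtain ⟨n, hn⟩ := hc
  refine ⟨(Finset.range (n + 1)).image f, by simp, ?_⟩
  simpa [Set.accumulate_def, Nat.lt_succ_iff] using hn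

-- Unlike in `IsPiSystem.tendsto_probabilityMeasure_of_tendsto_of_mem`, the members of `S` need not
-- be neighbourhoods of their points; half-open arcs are not.
theorem tendsto_probabilityMeasure_of_isPiSystem [TopologicalSpace X] [OpensMeasurableSpace X]
    {S : Set (Set X)} (hpi : IsPiSystem S) (hcount : S.Countable)
    (hmeas : ∀ s ∈ S, MeasurableSet s)
    (hsmall : ∀ u : Set X, IsOpen u → ∀ y ∈ u, ∃ s ∈ S, y ∈ s ∧ s ⊆ u)
    {ι : Type*} {l : Filter ι} [l.IsCountablyGenerated] {μ : ι → ProbabilityMeasure X}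
    {ν : ProbabilityMeasure X} (h : ∀ s ∈ S, Tendsto (fun i ↦ μ i s) l (𝓝 (ν s))) :
    Tendsto μ l (𝓝 ν) := by
  rcases l.eq_or_neBot with rfl | _
  · exact tendsto_bot
  refine tendsto_of_forall_isOpen_le_liminf fun G hG ↦ ?_
  have hG_eq : G = ⋃₀ {s ∈ S | s ⊆ G} := by
    refine subset_antisymm (fun y hy ↦ ?_) (Set.sUnion_subset fun s hs ↦ hs.2)
    obtain ⟨s, hsS, hys, hsG⟩ := hsmall G hG y hy
    exact ⟨s, ⟨hsS, hsG⟩, hys⟩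
  refine (le_liminf_iff (isCoboundedUnder_ge_of_le (x := 1) l (by simp))
    (by isBoundedDefault)).2 fun c hc ↦ ?_
  have hc' : (c : ℝ≥0∞) < (ν : Measure X) (⋃₀ {s ∈ S | s ⊆ G}) := by
    rwa [← hG_eq, ← ProbabilityMeasure.ennreal_coeFn_eq_coeFn_toMeasure, ENNReal.coe_lt_coe]
  obtain ⟨t, ht, hct⟩ := exists_finset_lt_measure_biUnion (hcount.mono (Set.sep_subset _ _)) hc'
  rw [← ProbabilityMeasure.ennreal_coeFn_eq_coeFn_toMeasure, ENNReal.coe_lt_coe] at hct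
  have htend := hpi.tendsto_probabilityMeasure_biUnion (fun s hs ↦ (ht hs).1) hmeas h
  filter_upwards [htend.eventually_const_lt hct] with i hi
  exact hi.trans_le (ProbabilityMeasure.apply_mono _ (Set.iUnion₂_subset fun s hs ↦ (ht hs).2))

end WeakConvergence

section BirkhoffAverages

open BoundedContinuousFunction

variable {α E : Type*} [NormedAddCommGroup E] [NormedSpace ℝ E] {T : α → α} {g : α → E} {x : α}

lemma birkhoffSum_mul {M : Type*} [AddCommMonoid M] (T : α → α) (g : α → M) (r n : ℕ) (x : α) :
    birkhoffSum T g (r * n) x = birkhoffSum T^[r] (birkhoffSum T g r) n x := by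
  induction n with
  | zero => simp [birkhoffSum_zero]
  | succ n ih => rw [Nat.mul_succ, birkhoffSum_add, birkhoffSum_succ, ih, Function.iterate_mul]

lemma birkhoffAverage_mul (T : α → α) (g : α → E) (r n : ℕ) (x : α) :
    birkhoffAverage ℝ T g (r * n) x =
      birkhoffAverage ℝ T^[r] (birkhoffAverage ℝ T g r) n x := by
  simp only [birkhoffAverage, birkhoffSum_mul, Nat.cast_mul, mul_inv, mul_comm (r : ℝ)⁻¹, mul_smul]
  simp only [birkhoffSum, birkhoffAverage, Finset.smul_sum]

lemma birkhoffSum_eq_smul_birkhoffAverage (T : α → α) (g : α → E) (n : ℕ) (x : α) :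
    birkhoffSum T g n x = (n : ℝ) • birkhoffAverage ℝ T g n x := by
  obtain rfl | hn := eq_or_ne n 0
  · simp [birkhoffSum_zero]
  · rw [birkhoffAverage, smul_inv_smul₀ (Nat.cast_ne_zero.2 hn)]

lemma norm_birkhoffSum_le {M : Type*} [SeminormedAddCommGroup M] {f : α → M} {C : ℝ}
    (hC : ∀ y, ‖f y‖ ≤ C) (n : ℕ) (x : α) : ‖birkhoffSum T f n x‖ ≤ n * C := by
  simpa [birkhoffSum] using norm_sum_le_of_le (Finset.range n) fun k _ ↦ hC (T^[k] x)

lemma tendsto_mod_div_atTop {r : ℕ} (hr : 0 < r) :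
    Tendsto (fun n : ℕ ↦ ((n % r : ℕ) : ℝ) / n) atTop (𝓝 0) := by
  refine squeeze_zero (fun n ↦ by positivity) (fun n ↦ ?_)
    (tendsto_const_div_atTop_nhds_zero_nat (r : ℝ))
  gcongr
  exact (Nat.mod_lt n hr).le

lemma tendsto_mul_div_div_atTop {r : ℕ} (hr : 0 < r) :
    Tendsto (fun n : ℕ ↦ ((r * (n / r) : ℕ) : ℝ) / n) atTop (𝓝 1) := by
  refine (by simpa using (tendsto_mod_div_atTop hr).const_sub 1 :
    Tendsto (fun n : ℕ ↦ 1 - ((n % r : ℕ) : ℝ) / n) atTop (𝓝 1)).congr' ?_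
  filter_upwards [eventually_ne_atTop 0] with n hn
  rw [sub_eq_iff_eq_add, ← add_div, ← Nat.cast_add, Nat.div_add_mod,
    div_self (by exact_mod_cast hn)]

theorem tendsto_birkhoffAverage_of_tendsto_mul {r : ℕ} (hr : 0 < r) {C : ℝ} (hC : ∀ y, ‖g y‖ ≤ C)
    {a : E} (h : Tendsto (fun n ↦ birkhoffAverage ℝ T g (r * n) x) atTop (𝓝 a)) :
    Tendsto (fun n ↦ birkhoffAverage ℝ T g n x) atTop (𝓝 a) := by
  have hsplit (n : ℕ) : birkhoffAverage ℝ T g n x =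
      (((r * (n / r) : ℕ) : ℝ) / n) • birkhoffAverage ℝ T g (r * (n / r)) x +
        (n : ℝ)⁻¹ • birkhoffSum T g (n % r) (T^[r * (n / r)] x) := by
    rw [div_eq_inv_mul, mul_smul, ← birkhoffSum_eq_smul_birkhoffAverage, ← smul_add,
      ← birkhoffSum_add, Nat.div_add_mod, birkhoffAverage]
  have hmain : Tendsto (fun n : ℕ ↦
      (((r * (n / r) : ℕ) : ℝ) / n) • birkhoffAverage ℝ T g (r * (n / r)) x) atTop (𝓝 a) := by
    simpa using (tendsto_mul_div_div_atTop hr).smul (h.comp (Nat.tendsto_div_const_atTop hr.ne'))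
  have hrest : Tendsto (fun n : ℕ ↦
      (n : ℝ)⁻¹ • birkhoffSum T g (n % r) (T^[r * (n / r)] x)) atTop (𝓝 0) := by
    refine squeeze_zero_norm (fun n ↦ ?_)
      (by simpa using (tendsto_mod_div_atTop hr).mul_const C :
        Tendsto (fun n : ℕ ↦ ((n % r : ℕ) : ℝ) / n * C) atTop (𝓝 0))
    rw [norm_smul, norm_inv, Real.norm_natCast, div_mul_eq_mul_div, div_eq_inv_mul]
    gcongr
    exact norm_birkhoffSum_le hC _ _
  simpa only [← hsplit, add_zero] using hmain.add hrest

lemma exists_boundedContinuousFunction_eq_birkhoffAverage [TopologicalSpace α] (hT : Continuous T)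
    (f : α →ᵇ E) (n : ℕ) : ∃ F : α →ᵇ E, ∀ y, F y = birkhoffAverage ℝ T f n y :=
  ⟨(n : ℝ)⁻¹ • ∑ k ∈ Finset.range n, f.compContinuous ⟨T^[k], hT.iterate k⟩, fun y ↦ by
    simp [birkhoffAverage, birkhoffSum]⟩

end BirkhoffAverages

section AverageMeasure

open scoped ENNReal
open BoundedContinuousFunction

variable {X : Type*} [MeasurableSpace X] {T : X → X}

/-- The average `(1 / n) ∑_{k < n} (T^k)_* ν` of the first `n` push-forwards of `ν`, dual to
`birkhoffAverage`. Junk value `∞ • 0 = 0` for `n = 0`. -/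
noncomputable def averageMeasure (T : X → X) (n : ℕ) (ν : Measure X) : Measure X :=
  (n : ℝ≥0∞)⁻¹ • ∑ k ∈ Finset.range n, ν.map T^[k]

variable {ν : Measure X} {n : ℕ}

lemma isProbabilityMeasure_averageMeasure (hT : Measurable T) (hn : n ≠ 0)
    [IsProbabilityMeasure ν] : IsProbabilityMeasure (averageMeasure T n ν) := by
  have (k : ℕ) : IsProbabilityMeasure (ν.map T^[k]) :=
    Measure.isProbabilityMeasure_map (hT.iterate k).aemeasurable
  constructor
  simp [averageMeasure, ENNReal.inv_mul_cancel, hn]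

lemma absolutelyContinuous_averageMeasure (hn : n ≠ 0) : ν ≪ averageMeasure T n ν := by
  intro s hs
  simp only [averageMeasure, Measure.smul_apply, smul_eq_mul, mul_eq_zero, ENNReal.inv_eq_zero,
    ENNReal.natCast_ne_top, false_or, Measure.finsetSum_apply, Finset.sum_eq_zero_iff] at hs
  simpa using hs 0 (Finset.mem_range.2 hn.bot_lt)

lemma averageMeasure_eq_self (hT : MeasurePreserving T ν ν) (hn : n ≠ 0) :
    averageMeasure T n ν = ν := by
  simp only [averageMeasure, (hT.iterate _).map_eq, Finset.sum_const, Finset.card_range]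
  rw [← Nat.cast_smul_eq_nsmul ℝ≥0∞, smul_smul, ENNReal.inv_mul_cancel (by simpa) (by simp),
    one_smul]

lemma measureReal_averageMeasure_dirac (hT : Measurable T) {s : Set X} (hs : MeasurableSet s)
    (n : ℕ) (x : X) :
    (averageMeasure T n (.dirac x)).real s =
      ((Finset.range n).filter fun k ↦ T^[k] x ∈ s).card / (n : ℝ) := by
  have hk (k : ℕ) : (Measure.dirac x).map T^[k] = .dirac (T^[k] x) :=
    Measure.map_dirac' (hT.iterate k) x
  simp [averageMeasure, Measure.real, hk, Measure.dirac_apply' _ hs, Set.indicator_apply,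
    div_eq_inv_mul]

variable [TopologicalSpace X] [BorelSpace X]

lemma integral_averageMeasure [IsFiniteMeasure ν] (hT : Continuous T) (f : X →ᵇ ℝ) (n : ℕ) :
    ∫ y, f y ∂averageMeasure T n ν = ∫ y, birkhoffAverage ℝ T f n y ∂ν := by
  have hint (k : ℕ) : Integrable (fun y ↦ f (T^[k] y)) ν :=
    (f.compContinuous ⟨T^[k], hT.iterate k⟩).integrable ν
  have hmap (k : ℕ) : ∫ y, f y ∂ν.map T^[k] = ∫ y, f (T^[k] y) ∂ν :=
    integral_map (hT.iterate k).measurable.aemeasurable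
      f.continuous.measurable.aestronglyMeasurable
  simp only [birkhoffAverage, birkhoffSum, averageMeasure]
  rw [integral_smul_measure, integral_finsetSum_measure fun k _ ↦ f.integrable _, integral_smul,
    integral_finsetSum _ fun k _ ↦ hint k]
  simp [hmap]

lemma integral_averageMeasure_dirac (hT : Continuous T) (f : X →ᵇ ℝ) (n : ℕ) (x : X) :
    ∫ y, f y ∂averageMeasure T n (.dirac x) = birkhoffAverage ℝ T f n x := by
  obtain ⟨F, hF⟩ := exists_boundedContinuousFunction_eq_birkhoffAverage hT f n
  simp only [integral_averageMeasure hT, ← hF]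
  exact integral_dirac' _ _ F.continuous.measurable.stronglyMeasurable

end AverageMeasure

section GenericPoints

open BoundedContinuousFunction

variable {X : Type*} [MeasurableSpace X] {T : X → X} {x : X}

/-- The empirical measure `(1 / (n + 1)) ∑_{k ≤ n} δ_{T^k x}`; the shift of `n` makes it a
probability measure for every `n`. -/
noncomputable def orbitMeasure (hT : Measurable T) (x : X) (n : ℕ) : ProbabilityMeasure X :=
  ⟨averageMeasure T (n + 1) (.dirac x), isProbabilityMeasure_averageMeasure hT n.succ_ne_zero⟩

lemma coe_orbitMeasure_apply (hT : Measurable T) {s : Set X} (hs : MeasurableSet s) (x : X)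
    (n : ℕ) : (orbitMeasure hT x n s : ℝ) =
      ((Finset.range (n + 1)).filter fun k ↦ T^[k] x ∈ s).card / ((n + 1 : ℕ) : ℝ) :=
  measureReal_averageMeasure_dirac hT hs (n + 1) x

variable [TopologicalSpace X]

/-- `x` is generic for `μ` under `T`: time averages along the orbit of `x` converge to space
averages, for bounded continuous observables. -/
def IsGeneric (T : X → X) (μ : Measure X) (x : X) : Prop :=
  ∀ f : X →ᵇ ℝ, Tendsto (fun n ↦ birkhoffAverage ℝ T f n x) atTop (𝓝 (∫ y, f y ∂μ))

variable [BorelSpace X]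

lemma tendsto_orbitMeasure_iff (hT : Continuous T) {L : Filter ℕ} {ν : ProbabilityMeasure X} :
    Tendsto (orbitMeasure hT.measurable x) L (𝓝 ν) ↔
      ∀ f : X →ᵇ ℝ, Tendsto (fun n ↦ birkhoffAverage ℝ T f (n + 1) x) L (𝓝 (∫ y, f y ∂ν)) := by
  rw [ProbabilityMeasure.tendsto_iff_forall_integral_tendsto]
  exact forall_congr' fun f ↦ by
    simp only [orbitMeasure, ProbabilityMeasure.coe_mk, integral_averageMeasure_dirac hT]

lemma isGeneric_iff_tendsto_orbitMeasure (hT : Continuous T) {μ : ProbabilityMeasure X} :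
    IsGeneric T μ x ↔ Tendsto (orbitMeasure hT.measurable x) atTop (𝓝 μ) := by
  rw [tendsto_orbitMeasure_iff hT]
  exact forall_congr' fun f ↦ (tendsto_add_atTop_iff_nat 1).symm

lemma integral_birkhoffAverage_eq {μ : Measure X} [IsFiniteMeasure μ] (hT : Continuous T)
    (hμ : MeasurePreserving T μ μ) {r : ℕ} (hr : r ≠ 0) (f : X →ᵇ ℝ) :
    ∫ y, birkhoffAverage ℝ T f r y ∂μ = ∫ y, f y ∂μ := by
  rw [← integral_averageMeasure hT, averageMeasure_eq_self hμ hr]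

theorem IsGeneric.of_iterate {μ : Measure X} [IsFiniteMeasure μ] (hT : Continuous T)
    (hμ : MeasurePreserving T μ μ) {r : ℕ} (hr : 0 < r) (hx : IsGeneric T^[r] μ x) :
    IsGeneric T μ x := by
  intro f
  obtain ⟨F, hF⟩ := exists_boundedContinuousFunction_eq_birkhoffAverage hT f r
  refine tendsto_birkhoffAverage_of_tendsto_mul hr f.norm_coe_le_norm ?_
  simpa only [birkhoffAverage_mul, ← integral_birkhoffAverage_eq hT hμ hr.ne' f, ← funext hF]
    using hx F

variable [HasOuterApproxClosed X]

theorem measurePreserving_of_tendsto_orbitMeasure (hT : Continuous T) {L : Filter ℕ} [L.NeBot]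
    (hL : L ≤ atTop) {ν : ProbabilityMeasure X}
    (hν : Tendsto (orbitMeasure hT.measurable x) L (𝓝 ν)) :
    MeasurePreserving T (ν : Measure X) ν := by
  refine ⟨hT.measurable, ?_⟩
  have := Measure.isProbabilityMeasure_map (μ := (ν : Measure X)) hT.measurable.aemeasurable
  refine ext_of_forall_integral_eq_of_IsFiniteMeasure fun f ↦ ?_
  rw [integral_map hT.measurable.aemeasurable f.continuous.measurable.aestronglyMeasurable]
  rw [tendsto_orbitMeasure_iff hT] at hν
  have hdiff := (tendsto_birkhoffAverage_apply_sub_birkhoffAverage' ℝ (f := T) f.isBounded_range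
    x).comp ((tendsto_add_atTop_nat 1).mono_left hL)
  have hshift : Tendsto (fun n ↦ birkhoffAverage ℝ T f (n + 1) (T x)) L (𝓝 (∫ y, f y ∂ν)) := by
    simpa only [Function.comp_apply, sub_add_cancel, zero_add] using hdiff.add (hν f)
  refine tendsto_nhds_unique (hν (f.compContinuous ⟨T, hT⟩)) (hshift.congr fun n ↦ ?_)
  simp [birkhoffAverage, birkhoffSum, ← Function.iterate_succ_apply, Function.iterate_succ_apply']

theorem IsGeneric.averageMeasure_eq_of_tendsto_orbitMeasure_iterate {μ : Measure X}
    [IsFiniteMeasure μ] (hT : Continuous T) {r : ℕ} (hr : 0 < r) (hx : IsGeneric T μ x)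
    {L : Filter ℕ} [L.NeBot] (hL : L ≤ atTop) {ν : ProbabilityMeasure X}
    (hν : Tendsto (orbitMeasure (hT.iterate r).measurable x) L (𝓝 ν)) :
    averageMeasure T r ν = μ := by
  have := isProbabilityMeasure_averageMeasure (ν := (ν : Measure X)) hT.measurable hr.ne'
  refine ext_of_forall_integral_eq_of_IsFiniteMeasure fun f ↦ ?_
  obtain ⟨F, hF⟩ := exists_boundedContinuousFunction_eq_birkhoffAverage hT f r
  have hF_lim := (tendsto_orbitMeasure_iff (hT.iterate r)).1 hν F
  simp only [funext hF, ← birkhoffAverage_mul, ← integral_averageMeasure hT] at hF_lim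
  have hmul : Tendsto (fun n ↦ r * (n + 1)) atTop atTop :=
    (tendsto_add_atTop_nat 1).const_mul_atTop' hr
  exact tendsto_nhds_unique hF_lim ((hx f).comp (hmul.mono_left hL))

theorem IsGeneric.iterate [CompactSpace X] [T2Space X] {μ : Measure X} [IsProbabilityMeasure μ]
    (hT : Continuous T) {r : ℕ} (hr : 0 < r) (hμ : Ergodic T^[r] μ) (hx : IsGeneric T μ x) :
    IsGeneric T^[r] μ x := by
  have hprob : IsProbabilityMeasure μ := inferInstance
  have hTr := hT.iterate r
  refine (isGeneric_iff_tendsto_orbitMeasure hTr (μ := ⟨μ, hprob⟩)).2 ?_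
  refine (tendsto_iff_ultrafilter _ _ _).2 fun U hU ↦ ?_
  obtain ⟨ν, hν⟩ : ∃ ν, Tendsto (orbitMeasure hTr.measurable x) U (𝓝 ν) :=
    ⟨_, (U.map (orbitMeasure hTr.measurable x)).le_nhds_lim⟩
  have hac : (ν : Measure X) ≪ μ :=
    hx.averageMeasure_eq_of_tendsto_orbitMeasure_iterate hT hr hU hν ▸
      absolutelyContinuous_averageMeasure hr.ne'
  have hinv := measurePreserving_of_tendsto_orbitMeasure hTr hU hν
  have hνμ : ν = ⟨μ, hprob⟩ := Subtype.ext (hμ.eq_of_absolutelyContinuous (ν := ν) hinv hac)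
  rw [hνμ] at hν
  exact hν

end GenericPoints

section Digits

variable {q : ℕ} {x : ℝ}

lemma natCast_qdigit (hx : 0 ≤ x) (q n : ℕ) : (qdigit q x n : ℤ) = ⌊x * q ^ (n + 1)⌋ % q := by
  rw [qdigit, Int.natCast_mod, Int.toNat_of_nonneg (by positivity)]

lemma qdigit_eq_natFloor (q : ℕ) (x : ℝ) (n : ℕ) : qdigit q x n = ⌊x * q ^ (n + 1)⌋₊ % q := by
  rw [qdigit, Int.floor_toNat]

lemma qdigit_fract_mul_pow (hx : 0 ≤ x) (q n i : ℕ) :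
    qdigit q (Int.fract (x * q ^ n)) i = qdigit q x (n + i) := by
  have hfloor : Int.fract (x * q ^ n) * (q : ℝ) ^ (i + 1) =
      x * q ^ (n + i + 1) - ((q * (q ^ i * ⌊x * q ^ n⌋) : ℤ) : ℝ) := by
    rw [Int.fract]
    push_cast
    ring
  zify
  rw [natCast_qdigit (Int.fract_nonneg _), natCast_qdigit hx, hfloor, Int.floor_sub_intCast,
    Int.sub_mul_emod_self_left]

lemma exists_forall_qdigit_eq_iff_natFloor_eq {m : ℕ} {d : Fin m → ℕ} (hd : ∀ i, d i < q) :
    ∃ a < q ^ m, ∀ y ∈ Set.Ico (0 : ℝ) 1,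
      (∀ i : Fin m, qdigit q y i = d i) ↔ ⌊y * q ^ m⌋₊ = a := by
  induction m with
  | zero => exact ⟨0, by simp, fun y hy ↦ by simpa using hy.2⟩
  | succ m ih =>
    obtain ⟨a, ha, h⟩ := ih (d := Fin.init d) fun i ↦ hd _
    have hlast := hd (Fin.last m)
    have hq : 0 < q := (Nat.zero_le _).trans_lt hlast
    refine ⟨d (Fin.last m) + q * a, by rw [pow_succ]; nlinarith, fun y hy ↦ ?_⟩
    have hdiv : ⌊y * q ^ m⌋₊ = ⌊y * q ^ (m + 1)⌋₊ / q := by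
      rw [← Nat.floor_div_natCast, pow_succ, ← mul_assoc, mul_div_cancel_right₀ _ (by positivity)]
    have huniq : ⌊y * q ^ (m + 1)⌋₊ / q = a ∧ ⌊y * q ^ (m + 1)⌋₊ % q = d (Fin.last m) ↔
        d (Fin.last m) + q * a = ⌊y * q ^ (m + 1)⌋₊ := by
      rw [Nat.div_mod_unique hq, and_iff_left hlast]
    rw [Fin.forall_fin_succ', eq_comm (a := ⌊_⌋₊), ← huniq, ← hdiv]
    exact and_congr (h y hy) (by simp [qdigit_eq_natFloor])

end Digits

section Arcs

variable {a b : ℝ}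

lemma coe_equivIco_zero_coe (x : ℝ) :
    (AddCircle.equivIco 1 0 (x : UnitAddCircle) : ℝ) = Int.fract x := by
  simp [AddCircle.coe_equivIco_mk_apply (p := (1 : ℝ)) x]

lemma mem_coe_image_Ico_iff (ha : 0 ≤ a) (hb : b ≤ 1) {y : UnitAddCircle} :
    y ∈ ((↑) : ℝ → UnitAddCircle) '' Set.Ico a b ↔
      (AddCircle.equivIco 1 0 y : ℝ) ∈ Set.Ico a b := by
  refine ⟨?_, fun hy ↦ ⟨_, hy, AddCircle.coe_equivIco⟩⟩
  rintro ⟨t, ht, rfl⟩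
  rwa [coe_equivIco_zero_coe, Int.fract_eq_self.2 ⟨ha.trans ht.1, ht.2.trans_le hb⟩]

lemma measurableSet_coe_image_Ico (ha : 0 ≤ a) (hb : b ≤ 1) :
    MeasurableSet (((↑) : ℝ → UnitAddCircle) '' Set.Ico a b) := by
  have : ((↑) : ℝ → UnitAddCircle) '' Set.Ico a b =
      (fun y ↦ (AddCircle.measurableEquivIco 1 0 y : ℝ)) ⁻¹' Set.Ico a b :=
    Set.ext fun y ↦ mem_coe_image_Ico_iff ha hb
  rw [this]
  exact (measurable_subtype_coe.comp (AddCircle.measurableEquivIco 1 0).measurable)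
    measurableSet_Ico

lemma volume_coe_image_Ico (ha : 0 ≤ a) (hb : b ≤ 1) :
    volume (((↑) : ℝ → UnitAddCircle) '' Set.Ico a b) = ENNReal.ofReal (b - a) := by
  have hpreimage : ((↑) : ℝ → UnitAddCircle) ⁻¹' ((↑) '' Set.Ico a b) ∩ Set.Ico 0 1 =
      Set.Ico a b := by
    ext t
    rw [Set.mem_inter_iff, Set.mem_preimage, mem_coe_image_Ico_iff ha hb, coe_equivIco_zero_coe]
    refine ⟨fun h ↦ Int.fract_eq_self.2 h.2 ▸ h.1, fun h ↦ ?_⟩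
    have ht : t ∈ Set.Ico 0 1 := ⟨ha.trans h.1, h.2.trans_le hb⟩
    exact ⟨(Int.fract_eq_self.2 ht).symm ▸ h, ht⟩
  rw [AddCircle.add_projection_respects_measure 1 0 (measurableSet_coe_image_Ico ha hb), zero_add,
    measure_congr ((ae_eq_refl _).inter Ico_ae_eq_Ioc.symm)]
  exact (congrArg volume hpreimage).trans Real.volume_Ico

lemma frontier_coe_image_Ico_subset (a b : ℝ) :
    frontier (((↑) : ℝ → UnitAddCircle) '' Set.Ico a b) ⊆
      {(a : UnitAddCircle), (b : UnitAddCircle)} := by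
  have hclosure : closure (((↑) : ℝ → UnitAddCircle) '' Set.Ico a b) ⊆ (↑) '' Set.Icc a b :=
    closure_minimal (Set.image_mono Set.Ico_subset_Icc_self)
      (isCompact_Icc.image (AddCircle.continuous_mk' 1)).isClosed
  have hinterior : (↑) '' Set.Ioo a b ⊆ interior (((↑) : ℝ → UnitAddCircle) '' Set.Ico a b) :=
    interior_maximal (Set.image_mono Set.Ioo_subset_Ico_self)
      (QuotientAddGroup.isOpenMap_coe _ isOpen_Ioo)
  rintro _ ⟨hz, hz'⟩
  obtain ⟨t, ht, rfl⟩ := hclosure hz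
  obtain rfl | rfl | ht' := Set.eq_endpoints_or_mem_Ioo_of_mem_Icc ht
  · exact .inl rfl
  · exact .inr rfl
  · exact absurd (hinterior ⟨t, ht', rfl⟩) hz'

lemma volume_frontier_coe_image_Ico (a b : ℝ) :
    volume (frontier (((↑) : ℝ → UnitAddCircle) '' Set.Ico a b)) = 0 := by
  have hsingleton (z : UnitAddCircle) : volume {z} = 0 := by
    rw [← Metric.closedBall_zero, AddCircle.volume_closedBall]
    simp
  exact measure_mono_null (frontier_coe_image_Ico_subset a b)
    (measure_union_null (hsingleton _) (hsingleton _))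

end Arcs

section Cylinders

variable {q m : ℕ} {d : Fin m → ℕ}

/-- The set of points of the circle `ℝ / ℤ` whose representative in `[0, 1)` has a base-`q`
expansion starting with the word `d`. -/
def qcylinder (q : ℕ) {m : ℕ} (d : Fin m → ℕ) : Set UnitAddCircle :=
  {y | ∀ i : Fin m, qdigit q (AddCircle.equivIco 1 0 y) i = d i}

lemma iterate_nsmul_coe_mem_qcylinder_iff {x : ℝ} (hx : 0 ≤ x) (n : ℕ) :
    (q • ·)^[n] (x : UnitAddCircle) ∈ qcylinder q d ↔ ∀ i : Fin m, qdigit q x (n + i) = d i := by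
  have hcoe : (q • ·)^[n] (x : UnitAddCircle) = ((x * q ^ n : ℝ) : UnitAddCircle) := by
    simp [smul_iterate, mul_comm, nsmul_eq_mul, ← AddCircle.coe_nsmul]
  simp only [hcoe, qcylinder, Set.mem_ofPred_eq, coe_equivIco_zero_coe, qdigit_fract_mul_pow hx]

lemma exists_qcylinder_eq_coe_image_Ico (hd : ∀ i, d i < q) :
    ∃ a : ℝ, 0 ≤ a ∧ a + ((q : ℝ) ^ m)⁻¹ ≤ 1 ∧
      qcylinder q d = ((↑) : ℝ → UnitAddCircle) '' Set.Ico a (a + ((q : ℝ) ^ m)⁻¹) := by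
  obtain ⟨k, hk, h⟩ := exists_forall_qdigit_eq_iff_natFloor_eq hd
  have hqm : (0 : ℝ) < q ^ m := by exact_mod_cast k.zero_le.trans_lt hk
  have hk0 : (0 : ℝ) ≤ k / q ^ m := by positivity
  have hadd : (k : ℝ) / q ^ m + ((q : ℝ) ^ m)⁻¹ = (k + 1) / q ^ m := by ring
  have hk1 : ((k : ℝ) + 1) / q ^ m ≤ 1 := by rw [div_le_one hqm]; exact_mod_cast hk
  refine ⟨k / q ^ m, hk0, hadd.trans_le hk1, Set.ext fun y ↦ ?_⟩
  have hy : (AddCircle.equivIco 1 0 y : ℝ) ∈ Set.Ico 0 1 := by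
    simpa using (AddCircle.equivIco 1 0 y).2
  rw [hadd, mem_coe_image_Ico_iff hk0 hk1, qcylinder, Set.mem_ofPred_eq, h _ hy,
    Nat.floor_eq_iff (mul_nonneg hy.1 hqm.le), Set.mem_Ico, div_le_iff₀ hqm, lt_div_iff₀ hqm]

lemma measurableSet_qcylinder (hd : ∀ i, d i < q) : MeasurableSet (qcylinder q d) := by
  obtain ⟨a, ha0, ha1, ha⟩ := exists_qcylinder_eq_coe_image_Ico hd
  exact ha ▸ measurableSet_coe_image_Ico ha0 ha1

lemma volume_qcylinder (hd : ∀ i, d i < q) :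
    volume (qcylinder q d) = ENNReal.ofReal ((q : ℝ) ^ m)⁻¹ := by
  obtain ⟨a, ha0, ha1, ha⟩ := exists_qcylinder_eq_coe_image_Ico hd
  rw [ha, volume_coe_image_Ico ha0 ha1, add_sub_cancel_left]

lemma volume_frontier_qcylinder (hd : ∀ i, d i < q) : volume (frontier (qcylinder q d)) = 0 := by
  obtain ⟨a, -, -, ha⟩ := exists_qcylinder_eq_coe_image_Ico hd
  rw [ha, volume_frontier_coe_image_Ico]

/-- The cylinders of the words considered in `IsNormal`. -/
def qcylinders (q : ℕ) : Set (Set UnitAddCircle) :=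
  {s | ∃ m > 0, ∃ d : Fin m → ℕ, (∀ i, d i < q) ∧ qcylinder q d = s}

lemma countable_qcylinders (q : ℕ) : (qcylinders q).Countable := by
  refine (Set.countable_range fun w : Σ m, Fin m → ℕ ↦ qcylinder q w.2).mono ?_
  rintro _ ⟨m, -, d, -, rfl⟩
  exact ⟨⟨m, d⟩, rfl⟩

lemma qcylinder_subset_qcylinder {n : ℕ} {d' : Fin n → ℕ} (hmn : m ≤ n) {y : UnitAddCircle}
    (hy : y ∈ qcylinder q d) (hy' : y ∈ qcylinder q d') : qcylinder q d' ⊆ qcylinder q d :=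
  fun _ hz i ↦ (hz (i.castLE hmn)).trans ((hy' (i.castLE hmn)).symm.trans (hy i))

lemma isPiSystem_qcylinders (q : ℕ) : IsPiSystem (qcylinders q) := by
  rintro _ ⟨m, hm, d, hd, rfl⟩ _ ⟨n, hn, d', hd', rfl⟩ ⟨y, hy, hy'⟩
  obtain hmn | hnm := le_total m n
  · rw [Set.inter_eq_self_of_subset_right (qcylinder_subset_qcylinder hmn hy hy')]
    exact ⟨n, hn, d', hd', rfl⟩
  · rw [Set.inter_eq_self_of_subset_left (qcylinder_subset_qcylinder hnm hy' hy)]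
    exact ⟨m, hm, d, hd, rfl⟩

lemma exists_mem_qcylinders_subset (hq : 2 ≤ q) {u : Set UnitAddCircle} (hu : IsOpen u)
    {y : UnitAddCircle} (hy : y ∈ u) : ∃ s ∈ qcylinders q, y ∈ s ∧ s ⊆ u := by
  set t : ℝ := ↑(AddCircle.equivIco 1 0 y)
  have htu : (t : UnitAddCircle) ∈ u := by rwa [AddCircle.coe_equivIco]
  obtain ⟨ε, hε, hball⟩ :=
    Metric.isOpen_iff.1 (hu.preimage (AddCircle.continuous_mk' 1)) t htu
  have hq1 : (1 : ℝ) < q := by exact_mod_cast hq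
  have hlim := (tendsto_pow_atTop_atTop_of_one_lt hq1).inv_tendsto_atTop
  obtain ⟨m, hmε, hm⟩ := ((hlim.eventually_lt_const hε).and (eventually_gt_atTop 0)).exists
  have hd (i : Fin m) : qdigit q t i < q := Nat.mod_lt _ (by lia)
  have hyd : y ∈ qcylinder q fun i : Fin m ↦ qdigit q t i := fun i ↦ rfl
  refine ⟨_, ⟨m, hm, _, hd, rfl⟩, hyd, ?_⟩
  obtain ⟨a, ha0, ha1, ha⟩ := exists_qcylinder_eq_coe_image_Ico hd
  rw [ha, mem_coe_image_Ico_iff ha0 ha1] at hyd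
  rw [ha]
  rintro _ ⟨t', ht', rfl⟩
  have hdist := Real.dist_le_of_mem_Icc (Set.Ico_subset_Icc_self ht') (Set.Ico_subset_Icc_self hyd)
  refine hball (Metric.mem_ball.2 (hdist.trans_lt ?_))
  simpa using hmε

end Cylinders

section Normality

variable {q m : ℕ} {d : Fin m → ℕ} {x : ℝ}

/-- The Haar measure of the circle `ℝ / ℤ`, bundled as a probability measure. -/
noncomputable def circleVolume : ProbabilityMeasure UnitAddCircle :=
  ⟨volume, ⟨by simp⟩⟩

lemma circleVolume_qcylinder (hd : ∀ i, d i < q) :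
    (circleVolume (qcylinder q d) : ℝ) = ((q : ℝ) ^ m)⁻¹ := by
  change (volume (qcylinder q d)).toReal = _
  rw [volume_qcylinder hd, ENNReal.toReal_ofReal (by positivity)]

lemma orbitMeasure_qcylinder (hx : 0 ≤ x) (hd : ∀ i, d i < q) (n : ℕ) :
    (orbitMeasure (continuous_nsmul q).measurable (x : UnitAddCircle) n (qcylinder q d) : ℝ) =
      ((Finset.range (n + 1)).filter fun k ↦ ∀ i : Fin m, qdigit q x (k + i) = d i).card /
        ((n + 1 : ℕ) : ℝ) := by
  simp only [coe_orbitMeasure_apply _ (measurableSet_qcylinder hd),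
    iterate_nsmul_coe_mem_qcylinder_iff hx]

lemma isNormal_iff_tendsto_orbitMeasure_qcylinder (hx : 0 ≤ x) :
    IsNormal q x ↔ ∀ m : ℕ, 0 < m → ∀ d : Fin m → ℕ, (∀ i, d i < q) →
      Tendsto (fun n ↦ orbitMeasure (continuous_nsmul q).measurable (x : UnitAddCircle) n
        (qcylinder q d)) atTop (𝓝 (circleVolume (qcylinder q d))) := by
  refine forall₄_congr fun m _ d hd ↦ ?_
  simp only [← NNReal.tendsto_coe, circleVolume_qcylinder hd, orbitMeasure_qcylinder hx hd]
  exact (tendsto_add_atTop_iff_nat 1).symm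

theorem isNormal_iff_isGeneric (hq : 2 ≤ q) (hx : 0 ≤ x) :
    IsNormal q x ↔ IsGeneric (q • ·) circleVolume (x : UnitAddCircle) := by
  rw [isNormal_iff_tendsto_orbitMeasure_qcylinder hx,
    isGeneric_iff_tendsto_orbitMeasure (continuous_nsmul q)]
  refine ⟨fun h ↦ ?_, fun h m _ d hd ↦ ?_⟩
  · refine tendsto_probabilityMeasure_of_isPiSystem (isPiSystem_qcylinders q)
      (countable_qcylinders q) ?_ (fun u hu y hy ↦ exists_mem_qcylinders_subset hq hu hy) ?_
    · rintro _ ⟨m, -, d, hd, rfl⟩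
      exact measurableSet_qcylinder hd
    · rintro _ ⟨m, hm, d, hd, rfl⟩
      exact h m hm d hd
  · exact ProbabilityMeasure.tendsto_measure_of_null_frontier_of_tendsto h
      ((ProbabilityMeasure.null_iff_toMeasure_null _ _).2 (volume_frontier_qcylinder hd))

theorem isNormal_iff_isGeneric_pow (hq : 2 ≤ q) (hx : 0 ≤ x) {r : ℕ} (hr : 0 < r) :
    IsNormal q x ↔ IsGeneric (q ^ r • ·) circleVolume (x : UnitAddCircle) := by
  have hcont : Continuous fun y : UnitAddCircle ↦ q • y := continuous_nsmul q
  have herg : Ergodic (fun y : UnitAddCircle ↦ q • y)^[r] circleVolume := by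
    rw [smul_iterate]
    exact AddCircle.ergodic_nsmul (Nat.one_lt_pow hr.ne' hq)
  have hpres : MeasurePreserving (fun y : UnitAddCircle ↦ q • y) circleVolume circleVolume :=
    (AddCircle.ergodic_nsmul hq).toMeasurePreserving
  rw [isNormal_iff_isGeneric hq hx, ← smul_iterate]
  exact ⟨.iterate hcont hr herg, .of_iterate hcont hpres hr⟩

end Normality

theorem schmidt_equivalent_bases_general (p q : ℕ) (hp : 2 ≤ p) (hq : 2 ≤ q)
    (r s : ℕ) (hr : 0 < r) (hs : 0 < s) (hpq : p ^ r = q ^ s) (x : ℝ) (hx : 0 ≤ x) :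
    IsNormal p x ↔ IsNormal q x := by
  rw [isNormal_iff_isGeneric_pow hp hx hr, isNormal_iff_isGeneric_pow hq hx hs, hpq]

/-- **Schmidt, part 1**: if `p^r = q^s` for some positive integers `r, s`, then `x ∈ [0,1)` is
normal to base `p` iff it is normal to base `q`. -/
theorem schmidt_equivalent_bases (p q : ℕ) (hp : 2 ≤ p) (hq : 2 ≤ q)
    (r s : ℕ) (hr : 0 < r) (hs : 0 < s) (hpq : p ^ r = q ^ s)
    (x : ℝ) (hx : x ∈ Set.Ico (0 : ℝ) 1) :
    IsNormal p x ↔ IsNormal q x :=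
  schmidt_equivalent_bases_general p q hp hq r s hr hs hpq x hx.1
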